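/- arXiv:2405.01092 — 6 statements merged into one kernel-verified Lean document; each statement's English description precedes it below -/
import Mathlib

section
/- There exists a unique k-linear map Φ : g →ₗ End_k(T(g1) ⊗_k U(g2)) such that: (a) for all g ∈ g and m ∈ U(g2), Φ(g)(1 ⊗ m) = ι_T(p1(g)) ⊗ m + 1 ⊗ (σ2(p2(g))·m); and (b) for all g ∈ g, x ∈ g1, t ∈ T(g1), m ∈ U(g2), Φ(g)((ι_T(x)·t) ⊗ m) = Φ([g, j1(x)])(t ⊗ m) + (L_{ι_T(x)} ⊗ id)(Φ(g)(t ⊗ m)), where L_{ι_T(x)} is left multiplication by ι_T(x) in T(g1). -/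
/-!
For fixed `t ∈ T(g₁)`, the values `(G, m) ↦ Φ(G)(t ⊗ m)` form an element `F_t` of the module
`H = Hom(g, Hom(U(g₂), T(g₁) ⊗ U(g₂)))`. Condition (a) prescribes `F_1`, and condition (b) says
`F_{x t} = A_x F_t`, where `A_x F = (G ↦ F [G, x] + (L_x ⊗ id) ∘ F G)` is an endomorphism of `H`
depending linearly on `x ∈ g₁`. By the universal property of the tensor algebra, `x ↦ A_x` extends
to an algebra map `T(g₁) → End(H)`, so `F_t` is obtained by letting `t` act on `F_1`. Uniqueness is
induction on `t`, multiplying by one generator of `T(g₁)` at a time.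
-/

open scoped TensorProduct

/-- Induction on the tensor algebra by left multiplication by generators. -/
theorem tensorAlgebra_induction_left {k M : Type*} [CommRing k] [AddCommGroup M] [Module k M]
    (S : Submodule k (TensorAlgebra k M)) (h1 : (1 : TensorAlgebra k M) ∈ S)
    (hι : ∀ (x : M) (t : TensorAlgebra k M), t ∈ S → TensorAlgebra.ι k x * t ∈ S)
    (t : TensorAlgebra k M) : t ∈ S := by
  -- The stronger claim that left multiplication by `t` preserves `S` is stable under products.
  have key : ∀ s ∈ S, t * s ∈ S := by
    induction t using TensorAlgebra.induction with
    | algebraMap r =>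
      intro s hs
      rw [← Algebra.smul_def]
      exact S.smul_mem r hs
    | ι x => exact fun s hs => hι x s hs
    | mul a b ha hb =>
      intro s hs
      rw [mul_assoc]
      exact ha _ (hb _ hs)
    | add a b ha hb =>
      intro s hs
      rw [add_mul]
      exact S.add_mem (ha s hs) (hb s hs)
  simpa using key 1 h1

section Construction

-- The commutator bracket on `U(g₂)`, for which `UniversalEnvelopingAlgebra.ι` is a Lie morphism.
attribute [local instance] LieRing.ofAssociativeRing

variable {k : Type*} [CommRing k] {g : Type*} [LieRing g] [LieAlgebra k g]
  (g₁ g₂ : LieSubalgebra k g)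

/-- The linear map `x ↦ A_x` from `g₁` to the endomorphisms of
`Hom(g, Hom(U(g₂), T(g₁) ⊗ U(g₂)))`, where
`A_x F = (G ↦ F [G, x] + (L_x ⊗ id) ∘ F G)`. -/
noncomputable def phiStep :
    g₁ →ₗ[k] Module.End k (g →ₗ[k] UniversalEnvelopingAlgebra k g₂ →ₗ[k]
      TensorAlgebra k g₁ ⊗[k] UniversalEnvelopingAlgebra k g₂) :=
  LinearMap.mk₂ k
    (fun x F =>
      F ∘ₗ (LieModule.toEnd k g g : g →ₗ[k] Module.End k g).flip (x : g) +
        (LinearMap.llcomp k _ _ _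
          (TensorProduct.map (LinearMap.mulLeft k (TensorAlgebra.ι k x)) LinearMap.id)) ∘ₗ F)
    (fun x y F => by
      ext G m
      have h : LinearMap.mulLeft k (TensorAlgebra.ι k x + TensorAlgebra.ι k y) =
          LinearMap.mulLeft k (TensorAlgebra.ι k x) + LinearMap.mulLeft k (TensorAlgebra.ι k y) :=
        map_add (LinearMap.mul k (TensorAlgebra k g₁)) _ _
      simp [h, TensorProduct.map_add_left]
      abel)
    (fun c x F => by
      ext G m
      have h : LinearMap.mulLeft k (c • TensorAlgebra.ι k x) =
          c • LinearMap.mulLeft k (TensorAlgebra.ι k x) :=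
        map_smul (LinearMap.mul k (TensorAlgebra k g₁)) _ _
      simp [h, TensorProduct.map_smul_left])
    (fun x F F' => by
      ext G m
      simp
      abel)
    (fun c x F => by
      ext G m
      simp)

theorem phiStep_apply (x : g₁) (F : g →ₗ[k] UniversalEnvelopingAlgebra k g₂ →ₗ[k]
      TensorAlgebra k g₁ ⊗[k] UniversalEnvelopingAlgebra k g₂) (G : g)
    (m : UniversalEnvelopingAlgebra k g₂) :
    phiStep g₁ g₂ x F G m = F ⁅G, (x : g)⁆ m +
      TensorProduct.map (LinearMap.mulLeft k (TensorAlgebra.ι k x)) LinearMap.id (F G m) :=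
  rfl

/-- The initial value `F_1 = ((G, m) ↦ ι(p₁ G) ⊗ m + 1 ⊗ (ι(p₂ G) * m))` prescribed by the
action on `1 ⊗ m`. -/
noncomputable def phiInit (p₁ : g →ₗ[k] g₁) (p₂ : g →ₗ[k] g₂) :
    g →ₗ[k] UniversalEnvelopingAlgebra k g₂ →ₗ[k]
      TensorAlgebra k g₁ ⊗[k] UniversalEnvelopingAlgebra k g₂ :=
  TensorProduct.mk k _ _ ∘ₗ TensorAlgebra.ι k ∘ₗ p₁ +
    LinearMap.llcomp k _ _ _ (TensorProduct.mk k _ _ 1) ∘ₗ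
      LinearMap.mul k (UniversalEnvelopingAlgebra k g₂) ∘ₗ
        LieHom.toLinearMap (UniversalEnvelopingAlgebra.ι k) ∘ₗ p₂

/-- The map `g → End(T(g₁) ⊗ U(g₂))` sending `G` to `t ⊗ m ↦ F_t G m`, where `F_t` is the result
of letting `t` act on `phiInit` through the algebra map extending `phiStep`. -/
noncomputable def phi (p₁ : g →ₗ[k] g₁) (p₂ : g →ₗ[k] g₂) :
    g →ₗ[k] Module.End k (TensorAlgebra k g₁ ⊗[k] UniversalEnvelopingAlgebra k g₂) :=
  (TensorProduct.lift.equiv (RingHom.id k) _ _ _).toLinearMap ∘ₗ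
    ((TensorAlgebra.lift k (phiStep g₁ g₂)).toLinearMap.flip (phiInit g₁ g₂ p₁ p₂)).flip

theorem phi_tmul (p₁ : g →ₗ[k] g₁) (p₂ : g →ₗ[k] g₂) (G : g) (t : TensorAlgebra k g₁)
    (m : UniversalEnvelopingAlgebra k g₂) :
    phi g₁ g₂ p₁ p₂ G (t ⊗ₜ[k] m) =
      TensorAlgebra.lift k (phiStep g₁ g₂) t (phiInit g₁ g₂ p₁ p₂) G m :=
  rfl

end Construction

theorem exists_unique_Phi {k : Type*} [CommRing k] {g : Type*} [LieRing g]
    [LieAlgebra k g] (g₁ g₂ : LieSubalgebra k g)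
    (hcompl : IsCompl g₁.toSubmodule g₂.toSubmodule)
    (p₁ : g →ₗ[k] g₁) (p₂ : g →ₗ[k] g₂)
    (hp : ∀ x : g, (p₁ x : g) + (p₂ x : g) = x) :
    ∃! Φ : g →ₗ[k] Module.End k
        (TensorAlgebra k g₁ ⊗[k] UniversalEnvelopingAlgebra k g₂),
      (∀ (G : g) (m : UniversalEnvelopingAlgebra k g₂),
          Φ G (1 ⊗ₜ[k] m) =
            TensorAlgebra.ι k (p₁ G) ⊗ₜ[k] m +
              1 ⊗ₜ[k] (UniversalEnvelopingAlgebra.ι k (p₂ G) * m)) ∧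
      (∀ (G : g) (x : g₁) (t : TensorAlgebra k g₁)
          (m : UniversalEnvelopingAlgebra k g₂),
          Φ G ((TensorAlgebra.ι k x * t) ⊗ₜ[k] m) =
            Φ ⁅G, (x : g)⁆ (t ⊗ₜ[k] m) +
              TensorProduct.map (LinearMap.mulLeft k (TensorAlgebra.ι k x))
                LinearMap.id (Φ G (t ⊗ₜ[k] m))) := by
  refine ⟨phi g₁ g₂ p₁ p₂, ⟨fun G m => ?_, fun G x t m => ?_⟩, ?_⟩
  · rw [phi_tmul, map_one]
    rfl
  · simp only [phi_tmul, map_mul, TensorAlgebra.lift_ι_apply, Module.End.mul_apply,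
      phiStep_apply]
  · rintro Ψ ⟨ha, hb⟩
    -- The `t` for which `Ψ G` and `phi G` agree on all `t ⊗ m`, simultaneously for all `G`,
    -- form a submodule; `G` must vary because (b) replaces it by `⁅G, x⁆`.
    let S : Submodule k (TensorAlgebra k g₁) :=
      { carrier := {t | ∀ G m, Ψ G (t ⊗ₜ[k] m) = phi g₁ g₂ p₁ p₂ G (t ⊗ₜ[k] m)}
        zero_mem' := fun G m => by simp
        add_mem' := fun hs ht G m => by
          rw [TensorProduct.add_tmul, map_add, map_add, hs G m, ht G m]
        smul_mem' := fun c t ht G m => by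
          rw [← TensorProduct.smul_tmul', map_smul, map_smul, ht G m] }
    have hS : ∀ t, t ∈ S := by
      refine tensorAlgebra_induction_left S (fun G m => ?_) (fun x t ht G m => ?_)
      · rw [ha, phi_tmul, map_one]
        rfl
      · rw [hb, ht, ht]
        simp only [phi_tmul, map_mul, TensorAlgebra.lift_ι_apply, Module.End.mul_apply,
          phiStep_apply]
    refine LinearMap.ext fun G => TensorProduct.ext' fun t m => hS t G m
end

section
/- The map Φ is filtered of degree one: for every n ≥ 0 and every g ∈ g, Φ(g) maps T_{≤n}(g1) ⊗_k U(g2) into T_{≤n+1}(g1) ⊗_k U(g2), where T_{≤n}(g1) denotes the k-submodule of the tensor algebra T(g1) spanned by the homogeneous components of degree at most n (the submodule ⨆_{i ≤ n} (range ι_T)^i). -/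
/-!
By linearity it suffices to treat pure tensors `t ⊗ m` with `t` homogeneous of degree `i ≤ n`,
and this is an induction on `i`, for all `G` simultaneously (`Phi_tmul_mem`). Degree zero is
relation (a). For `t = ι x * t'`, relation (b) gives two terms: `Φ ⁅G, x⁆ (t' ⊗ m)`, which lies in
filtration degree `≤ i` by induction, and left multiplication by `ι x` applied to
`Φ G (t' ⊗ m)`, which raises the filtration degree by at most one (`mulLeft_mem_filt`).
-/

open scoped TensorProduct

/-- The submodule `T_{≤n}(g₁)` of the tensor algebra: the span of the homogeneous
components of degree at most `n`. -/
noncomputable def tensorAlgebraLE (k : Type*) [CommRing k] (M : Type*) [AddCommGroup M]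
    [Module k M] (n : ℕ) : Submodule k (TensorAlgebra k M) :=
  ⨆ i ≤ n, (LinearMap.range (TensorAlgebra.ι k : M →ₗ[k] TensorAlgebra k M)) ^ i

/-- The image of `T_{≤n}(M) ⊗ U` in `T(M) ⊗ U`. As `U` need not be flat, this is the range of the
induced map rather than the tensor product itself. -/
noncomputable abbrev filt (k : Type*) [CommRing k] (M : Type*) [AddCommGroup M] [Module k M]
    (U : Type*) [AddCommGroup U] [Module k U] (n : ℕ) : Submodule k (TensorAlgebra k M ⊗[k] U) :=
  LinearMap.range (TensorProduct.map (tensorAlgebraLE k M n).subtype (LinearMap.id (R := k) (M := U)))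

section

variable {k : Type*} [CommRing k] {M : Type*} [AddCommGroup M] [Module k M]
  {U : Type*} [AddCommGroup U] [Module k U]

theorem pow_le_tensorAlgebraLE {i n : ℕ} (h : i ≤ n) :
    (LinearMap.range (TensorAlgebra.ι k : M →ₗ[k] TensorAlgebra k M)) ^ i ≤
      tensorAlgebraLE k M n :=
  le_iSup₂_of_le i h le_rfl

theorem tensorAlgebraLE_mono {m n : ℕ} (h : m ≤ n) :
    tensorAlgebraLE k M m ≤ tensorAlgebraLE k M n :=
  iSup₂_le fun _ hi => pow_le_tensorAlgebraLE (hi.trans h)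

theorem ι_mul_mem {n : ℕ} (x : M) {t : TensorAlgebra k M} (ht : t ∈ tensorAlgebraLE k M n) :
    TensorAlgebra.ι k x * t ∈ tensorAlgebraLE k M (n + 1) := by
  suffices h : tensorAlgebraLE k M n ≤
      (tensorAlgebraLE k M (n + 1)).comap (LinearMap.mulLeft k (TensorAlgebra.ι k x)) from h ht
  refine iSup₂_le fun i hi s hs => pow_le_tensorAlgebraLE (Nat.succ_le_succ hi) ?_
  rw [pow_succ']
  exact Submodule.mul_mem_mul ⟨x, rfl⟩ hs

theorem tmul_mem_filt {n : ℕ} {t : TensorAlgebra k M} (ht : t ∈ tensorAlgebraLE k M n) (m : U) :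
    t ⊗ₜ[k] m ∈ filt k M U n :=
  ⟨⟨t, ht⟩ ⊗ₜ[k] m, rfl⟩

/-- Submodules containing the pure tensors `t ⊗ m` with `t ∈ T_{≤n}` contain all of `filt n`. -/
theorem filt_le {n : ℕ} {S : Submodule k (TensorAlgebra k M ⊗[k] U)}
    (h : ∀ t ∈ tensorAlgebraLE k M n, ∀ m : U, t ⊗ₜ[k] m ∈ S) : filt k M U n ≤ S := by
  rintro _ ⟨y, rfl⟩
  induction y with
  | zero => simp
  | tmul t m => exact h t t.2 m
  | add a b ha hb => rw [map_add]; exact S.add_mem ha hb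

theorem filt_mono {m n : ℕ} (h : m ≤ n) : filt k M U m ≤ filt k M U n :=
  filt_le fun _ ht u => tmul_mem_filt (tensorAlgebraLE_mono h ht) u

theorem mulLeft_mem_filt {n : ℕ} (x : M) {w : TensorAlgebra k M ⊗[k] U}
    (hw : w ∈ filt k M U n) :
    TensorProduct.map (LinearMap.mulLeft k (TensorAlgebra.ι k x)) LinearMap.id w ∈
      filt k M U (n + 1) := by
  suffices h : filt k M U n ≤ (filt k M U (n + 1)).comap
      (TensorProduct.map (LinearMap.mulLeft k (TensorAlgebra.ι k x)) LinearMap.id) from h hw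
  exact filt_le fun t ht m => tmul_mem_filt (ι_mul_mem x ht) m

end

/-- The case of a pure tensor whose first factor is homogeneous of degree `i`. -/
theorem Phi_tmul_mem {k : Type*} [CommRing k] {g : Type*} [LieRing g]
    [LieAlgebra k g] {g₁ g₂ : LieSubalgebra k g} {p₁ : g →ₗ[k] g₁} {p₂ : g →ₗ[k] g₂}
    {Φ : g →ₗ[k] Module.End k
        (TensorAlgebra k g₁ ⊗[k] UniversalEnvelopingAlgebra k g₂)}
    (hΦa : ∀ (G : g) (m : UniversalEnvelopingAlgebra k g₂),
        Φ G (1 ⊗ₜ[k] m) =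
          TensorAlgebra.ι k (p₁ G) ⊗ₜ[k] m +
            1 ⊗ₜ[k] (UniversalEnvelopingAlgebra.ι k (p₂ G) * m))
    (hΦb : ∀ (G : g) (x : g₁) (t : TensorAlgebra k g₁)
        (m : UniversalEnvelopingAlgebra k g₂),
        Φ G ((TensorAlgebra.ι k x * t) ⊗ₜ[k] m) =
          Φ ⁅G, (x : g)⁆ (t ⊗ₜ[k] m) +
            TensorProduct.map (LinearMap.mulLeft k (TensorAlgebra.ι k x))
              LinearMap.id (Φ G (t ⊗ₜ[k] m)))
    (i : ℕ) (t : TensorAlgebra k g₁)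
    (ht : t ∈ (LinearMap.range (TensorAlgebra.ι k : g₁ →ₗ[k] TensorAlgebra k g₁)) ^ i)
    (G : g) (m : UniversalEnvelopingAlgebra k g₂) :
    Φ G (t ⊗ₜ[k] m) ∈ filt k g₁ (UniversalEnvelopingAlgebra k g₂) (i + 1) := by
  induction i generalizing t G m with
  | zero =>
    rw [pow_zero, Submodule.mem_one] at ht
    obtain ⟨c, rfl⟩ := ht
    rw [Algebra.algebraMap_eq_smul_one, TensorProduct.smul_tmul, hΦa]
    refine Submodule.add_mem _ (tmul_mem_filt (pow_le_tensorAlgebraLE (i := 1) le_rfl ?_) _)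
      (tmul_mem_filt (pow_le_tensorAlgebraLE (i := 0) (Nat.zero_le _) ?_) _)
    · rw [pow_one]
      exact ⟨_, rfl⟩
    · rw [pow_zero]
      exact Submodule.one_le.mp le_rfl
  | succ i ih =>
    rw [pow_succ'] at ht
    induction ht using Submodule.mul_induction_on' with
    | mem_mul_mem a ha s hs =>
      obtain ⟨x, rfl⟩ := ha
      rw [hΦb]
      exact Submodule.add_mem _ (filt_mono (Nat.le_succ _) (ih s hs _ m))
        (mulLeft_mem_filt x (ih s hs G m))
    | add a _ b _ ha hb =>
      rw [TensorProduct.add_tmul, map_add]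
      exact Submodule.add_mem _ ha hb

theorem Phi_filtered {k : Type*} [CommRing k] {g : Type*} [LieRing g]
    [LieAlgebra k g] (g₁ g₂ : LieSubalgebra k g)
    (hcompl : IsCompl g₁.toSubmodule g₂.toSubmodule)
    (p₁ : g →ₗ[k] g₁) (p₂ : g →ₗ[k] g₂)
    (hp : ∀ x : g, (p₁ x : g) + (p₂ x : g) = x)
    (Φ : g →ₗ[k] Module.End k
        (TensorAlgebra k g₁ ⊗[k] UniversalEnvelopingAlgebra k g₂))
    (hΦa : ∀ (G : g) (m : UniversalEnvelopingAlgebra k g₂),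
        Φ G (1 ⊗ₜ[k] m) =
          TensorAlgebra.ι k (p₁ G) ⊗ₜ[k] m +
            1 ⊗ₜ[k] (UniversalEnvelopingAlgebra.ι k (p₂ G) * m))
    (hΦb : ∀ (G : g) (x : g₁) (t : TensorAlgebra k g₁)
        (m : UniversalEnvelopingAlgebra k g₂),
        Φ G ((TensorAlgebra.ι k x * t) ⊗ₜ[k] m) =
          Φ ⁅G, (x : g)⁆ (t ⊗ₜ[k] m) +
            TensorProduct.map (LinearMap.mulLeft k (TensorAlgebra.ι k x))
              LinearMap.id (Φ G (t ⊗ₜ[k] m))) :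
    ∀ (n : ℕ) (G : g)
      (w : TensorAlgebra k g₁ ⊗[k] UniversalEnvelopingAlgebra k g₂),
      w ∈ LinearMap.range
          (TensorProduct.map (tensorAlgebraLE k g₁ n).subtype
            (LinearMap.id (R := k) (M := UniversalEnvelopingAlgebra k g₂))) →
      Φ G w ∈ LinearMap.range
          (TensorProduct.map (tensorAlgebraLE k g₁ (n + 1)).subtype
            (LinearMap.id (R := k) (M := UniversalEnvelopingAlgebra k g₂))) := by
  intro n G w hw
  let S := (filt k g₁ (UniversalEnvelopingAlgebra k g₂) (n + 1)).comap (Φ G)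
  suffices h : filt k g₁ (UniversalEnvelopingAlgebra k g₂) n ≤ S from h hw
  refine filt_le fun t ht m => ?_
  suffices h : tensorAlgebraLE k g₁ n ≤ S.comap ((TensorProduct.mk k _ _).flip m) from h ht
  exact iSup₂_le fun i hi s hs =>
    filt_mono (Nat.succ_le_succ hi) (Phi_tmul_mem hΦa hΦb i s hs G m)
end

section
/- The map Φ is compatible with the right U(g2)-module structure of T(g1) ⊗_k U(g2): for all g ∈ g, t ∈ T(g1) and m ∈ U(g2), one has Φ(g)(t ⊗ m) = (id_{T(g1)} ⊗ R_m)(Φ(g)(t ⊗ 1)), where R_m denotes right multiplication by m in U(g2). -/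
/-!
Both sides are linear in `t`, so it suffices to treat words in `T(g₁)`, by induction on their
length and for all `G` at once. For the empty word the claim is associativity in `U(g₂)`, read
off from `hΦa`. For `ι x * t`, formula `hΦb` reduces it to the claim for `t` (at `⁅G, x⁆` and
at `G`), because left multiplication on the first tensor factor commutes with right
multiplication on the second.
-/

open scoped TensorProduct

theorem Phi_right_module_compat {k : Type*} [CommRing k] {g : Type*} [LieRing g]
    [LieAlgebra k g] (g₁ g₂ : LieSubalgebra k g)
    (hcompl : IsCompl g₁.toSubmodule g₂.toSubmodule)
    (p₁ : g →ₗ[k] g₁) (p₂ : g →ₗ[k] g₂)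
    (hp : ∀ x : g, (p₁ x : g) + (p₂ x : g) = x)
    (Φ : g →ₗ[k] Module.End k
        (TensorAlgebra k g₁ ⊗[k] UniversalEnvelopingAlgebra k g₂))
    (hΦa : ∀ (G : g) (m : UniversalEnvelopingAlgebra k g₂),
        Φ G (1 ⊗ₜ[k] m) =
          TensorAlgebra.ι k (p₁ G) ⊗ₜ[k] m +
            1 ⊗ₜ[k] (UniversalEnvelopingAlgebra.ι k (p₂ G) * m))
    (hΦb : ∀ (G : g) (x : g₁) (t : TensorAlgebra k g₁)
        (m : UniversalEnvelopingAlgebra k g₂),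
        Φ G ((TensorAlgebra.ι k x * t) ⊗ₜ[k] m) =
          Φ ⁅G, (x : g)⁆ (t ⊗ₜ[k] m) +
            TensorProduct.map (LinearMap.mulLeft k (TensorAlgebra.ι k x))
              LinearMap.id (Φ G (t ⊗ₜ[k] m))) :
    ∀ (G : g) (t : TensorAlgebra k g₁) (m : UniversalEnvelopingAlgebra k g₂),
      Φ G (t ⊗ₜ[k] m) =
        TensorProduct.map LinearMap.id (LinearMap.mulRight k m)
          (Φ G (t ⊗ₜ[k] (1 : UniversalEnvelopingAlgebra k g₂))) := by
  -- `P t`: the claim for `t`, uniformly in `G`, since `hΦb` replaces `G` by `⁅G, x⁆`.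
  let P : TensorAlgebra k g₁ → Prop := fun t =>
    ∀ (G : g) (m : UniversalEnvelopingAlgebra k g₂),
      Φ G (t ⊗ₜ[k] m) =
        TensorProduct.map LinearMap.id (LinearMap.mulRight k m)
          (Φ G (t ⊗ₜ[k] (1 : UniversalEnvelopingAlgebra k g₂)))
  have h_one : P 1 := fun G m => by
    simp [hΦa]
  have h_comm : ∀ (x : g₁) (m : UniversalEnvelopingAlgebra k g₂)
      (z : TensorAlgebra k g₁ ⊗[k] UniversalEnvelopingAlgebra k g₂),
      TensorProduct.map (LinearMap.mulLeft k (TensorAlgebra.ι k x)) LinearMap.id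
          (TensorProduct.map LinearMap.id (LinearMap.mulRight k m) z) =
        TensorProduct.map LinearMap.id (LinearMap.mulRight k m)
          (TensorProduct.map (LinearMap.mulLeft k (TensorAlgebra.ι k x))
            LinearMap.id z) := fun x m z => by
    simp only [TensorProduct.map_map, LinearMap.id_comp, LinearMap.comp_id]
  -- Tensor algebra induction treats arbitrary products, while `hΦb` only handles a left
  -- factor `ι x`; so the induction runs over the elements `a` whose left multiplication
  -- preserves `P`.
  have h_mul : ∀ a t : TensorAlgebra k g₁, P t → P (a * t) := fun a => by
    induction a using TensorAlgebra.induction with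
    | algebraMap r =>
      intro t ht G m
      rw [← Algebra.smul_def, ← TensorProduct.smul_tmul', ← TensorProduct.smul_tmul',
        map_smul, map_smul, map_smul, ht G m]
    | ι x =>
      intro t ht G m
      rw [hΦb, hΦb, map_add, ht ⁅G, (x : g)⁆ m, ht G m, h_comm]
    | mul a b ha hb =>
      intro t ht
      rw [mul_assoc]
      exact ha _ (hb _ ht)
    | add a b ha hb =>
      intro t ht G m
      rw [add_mul, TensorProduct.add_tmul, TensorProduct.add_tmul, map_add, map_add, map_add,
        ha t ht G m, hb t ht G m]
  intro G t m
  have h := h_mul t 1 h_one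
  rw [mul_one] at h
  exact h G m
end

section
/- There is a unique k-linear map Φ_U : g →ₗ End_k(U(g1) ⊗_k U(g2)) such that for every g ∈ g the square commutes: (ψ1 ⊗ id_{U(g2)}) ∘ Φ(g) = Φ_U(g) ∘ (ψ1 ⊗ id_{U(g2)}), where ψ1 ⊗ id_{U(g2)} : T(g1) ⊗_k U(g2) → U(g1) ⊗_k U(g2); i.e. the action Φ passes to the quotient U(g1) = T(g1)/ker ψ1. -/
/-!
Post-compose `Φ` with `ψ₁ ⊗ id`, and write `V = U(g₁) ⊗ U(g₂)`. For fixed `m`, each `t ∈ T(g₁)`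
gives a linear map `f_t : g → V`, `f_t(G) = (ψ₁ ⊗ id)(Φ(G)(t ⊗ m))`, and hypothesis (b) reads
`f_{x t}(G) = f_t([G, x]) + x · f_t(G)`. The right-hand side is the usual action of `x ∈ g₁` on
`Hom(g, V)`, with `g₁` acting on `g` by the adjoint action and on `V` by left multiplication.
By the Jacobi identity this is a Lie action (`homRep`), so it extends to an algebra morphism
`ρ : U(g₁) → End(Hom(g, V))`, and induction on `t` yields `f_t = ρ(ψ₁ t) f_1`
(`homAct_mkAlgHom`). Hence `Φ_U(G)(u ⊗ m) = (ρ(u) f_1)(G)` makes the square commute. Uniqueness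
holds because `ψ₁ ⊗ id` is surjective.
-/

open scoped TensorProduct

namespace PhiDescent

attribute [local instance] LieRing.ofAssociativeRing

variable {k : Type*} [CommRing k] {g : Type*} [LieRing g] [LieAlgebra k g]
  (g₁ g₂ : LieSubalgebra k g)

/-- The action of `g₁` on `Hom(g, U(g₁) ⊗ U(g₂))`: `(x · f)(G) = f([G, x]) + x · f(G)`, where
`x` acts on `U(g₁) ⊗ U(g₂)` by left multiplication on the first factor. -/
noncomputable def homRep : g₁ →ₗ⁅k⁆
    Module.End k (g →ₗ[k] UniversalEnvelopingAlgebra k g₁ ⊗[k] UniversalEnvelopingAlgebra k g₂) where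
  toFun x :=
    { toFun := fun f => f ∘ₗ (-(LieAlgebra.ad k g (x : g))) +
        (LinearMap.mulLeft k (UniversalEnvelopingAlgebra.ι k x)).rTensor
          (UniversalEnvelopingAlgebra k g₂) ∘ₗ f
      map_add' := fun f f' => by ext; simp; abel
      map_smul' := fun c f => by ext; simp }
  map_add' x y := by
    ext f G
    have h : LinearMap.mulLeft k (UniversalEnvelopingAlgebra.ι k (x + y)) =
        LinearMap.mulLeft k (UniversalEnvelopingAlgebra.ι k x) +
          LinearMap.mulLeft k (UniversalEnvelopingAlgebra.ι k y) := by
      ext; simp [add_mul]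
    simp only [h, LinearMap.rTensor_add]
    simp [-lie_skew]
    abel
  map_smul' c x := by
    ext f G
    have h : LinearMap.mulLeft k (UniversalEnvelopingAlgebra.ι k (c • x)) =
        c • LinearMap.mulLeft k (UniversalEnvelopingAlgebra.ι k x) := by
      ext; simp
    simp only [h, LinearMap.rTensor_smul]
    simp
  map_lie' {x y} := by
    ext f G
    have h : LinearMap.mulLeft k (UniversalEnvelopingAlgebra.ι k ⁅x, y⁆) =
        LinearMap.mulLeft k (UniversalEnvelopingAlgebra.ι k x) ∘ₗ
            LinearMap.mulLeft k (UniversalEnvelopingAlgebra.ι k y) -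
          LinearMap.mulLeft k (UniversalEnvelopingAlgebra.ι k y) ∘ₗ
            LinearMap.mulLeft k (UniversalEnvelopingAlgebra.ι k x) := by
      ext a
      rw [LieHom.map_lie, LieRing.of_associative_ring_bracket]
      simp only [LinearMap.mulLeft_apply, LinearMap.sub_apply, LinearMap.comp_apply, sub_mul,
        mul_assoc]
    simp only [h, LinearMap.rTensor_sub, LinearMap.rTensor_comp,
      LieRing.of_associative_ring_bracket]
    simp
    abel

theorem homRep_apply (x : g₁)
    (f : g →ₗ[k] UniversalEnvelopingAlgebra k g₁ ⊗[k] UniversalEnvelopingAlgebra k g₂) (G : g) :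
    homRep g₁ g₂ x f G = f ⁅G, (x : g)⁆ +
      (LinearMap.mulLeft k (UniversalEnvelopingAlgebra.ι k x)).rTensor
          (UniversalEnvelopingAlgebra k g₂) (f G) := by
  rw [← lie_skew G (x : g)]
  rfl

/-- The extension of `homRep` to an algebra action of `U(g₁)`. -/
noncomputable def homAct : UniversalEnvelopingAlgebra k g₁ →ₐ[k]
    Module.End k (g →ₗ[k] UniversalEnvelopingAlgebra k g₁ ⊗[k] UniversalEnvelopingAlgebra k g₂) :=
  UniversalEnvelopingAlgebra.lift k (homRep g₁ g₂)

theorem mkAlgHom_surjective (L : Type*) [LieRing L] [LieAlgebra k L] :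
    Function.Surjective (UniversalEnvelopingAlgebra.mkAlgHom k L) :=
  RingCon.mkₐ_surjective (UniversalEnvelopingAlgebra.ringCon k L)

variable {g₁ g₂}

/-- The linear map `T(g₁) ⊗ U(g₂) → Hom(g, V)` obtained from `Φ` by projecting its values to
`V = U(g₁) ⊗ U(g₂)` and exchanging the two arguments. -/
noncomputable def projected (Φ : g →ₗ[k] Module.End k
    (TensorAlgebra k g₁ ⊗[k] UniversalEnvelopingAlgebra k g₂)) :
    TensorAlgebra k g₁ ⊗[k] UniversalEnvelopingAlgebra k g₂ →ₗ[k] g →ₗ[k]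
      UniversalEnvelopingAlgebra k g₁ ⊗[k] UniversalEnvelopingAlgebra k g₂ :=
  (Φ.compr₂ (TensorProduct.map (UniversalEnvelopingAlgebra.mkAlgHom k g₁).toLinearMap
    (LinearMap.id (R := k) (M := UniversalEnvelopingAlgebra k g₂)))).flip

theorem projected_apply (Φ : g →ₗ[k] Module.End k
    (TensorAlgebra k g₁ ⊗[k] UniversalEnvelopingAlgebra k g₂))
    (z : TensorAlgebra k g₁ ⊗[k] UniversalEnvelopingAlgebra k g₂) (G : g) :
    projected Φ z G = TensorProduct.map (UniversalEnvelopingAlgebra.mkAlgHom k g₁).toLinearMap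
      (LinearMap.id (R := k) (M := UniversalEnvelopingAlgebra k g₂)) (Φ G z) := rfl

/-- In particular, the projection of `Φ` at `t ⊗ m` depends on `t` only through its image
in `U(g₁)`. -/
theorem homAct_mkAlgHom (Φ : g →ₗ[k] Module.End k
    (TensorAlgebra k g₁ ⊗[k] UniversalEnvelopingAlgebra k g₂))
    (hΦb : ∀ (G : g) (x : g₁) (t : TensorAlgebra k g₁)
        (m : UniversalEnvelopingAlgebra k g₂),
        Φ G ((TensorAlgebra.ι k x * t) ⊗ₜ[k] m) =
          Φ ⁅G, (x : g)⁆ (t ⊗ₜ[k] m) +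
            TensorProduct.map (LinearMap.mulLeft k (TensorAlgebra.ι k x))
              LinearMap.id (Φ G (t ⊗ₜ[k] m)))
    (t : TensorAlgebra k g₁) (m : UniversalEnvelopingAlgebra k g₂) :
    homAct g₁ g₂ (UniversalEnvelopingAlgebra.mkAlgHom k g₁ t) (projected Φ (1 ⊗ₜ m)) =
      projected Φ (t ⊗ₜ m) := by
  -- The product case of the induction needs the statement for every right factor `s`, not only `1`.
  suffices H : ∀ s : TensorAlgebra k g₁,
      homAct g₁ g₂ (UniversalEnvelopingAlgebra.mkAlgHom k g₁ t) (projected Φ (s ⊗ₜ m)) =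
        projected Φ ((t * s) ⊗ₜ m) by simpa using H 1
  induction t using TensorAlgebra.induction with
  | algebraMap r =>
    intro s
    rw [AlgHom.commutes, AlgHom.commutes, Module.algebraMap_end_apply, ← Algebra.smul_def,
      ← TensorProduct.smul_tmul', map_smul]
  | ι x =>
    intro s
    ext G
    rw [homAct, UniversalEnvelopingAlgebra.lift_ι_apply', homRep_apply]
    simp only [projected_apply, hΦb, map_add]
    congr 1
    -- `ψ₁ ⊗ id` intertwines left multiplication by `x` in `T(g₁)` and in `U(g₁)`.
    induction Φ G (s ⊗ₜ[k] m) using TensorProduct.induction_on with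
    | zero => simp
    | tmul a b => simp
    | add a b ha hb => simp only [map_add, ha, hb]
  | mul a b ha hb =>
    intro s
    rw [map_mul, map_mul, Module.End.mul_apply, hb, ha, mul_assoc]
  | add a b ha hb =>
    intro s
    rw [map_add, map_add, LinearMap.add_apply, ha, hb, add_mul, TensorProduct.add_tmul, map_add]

end PhiDescent

theorem exists_unique_PhiU_descends {k : Type*} [CommRing k] {g : Type*} [LieRing g]
    [LieAlgebra k g] (g₁ g₂ : LieSubalgebra k g)
    (hcompl : IsCompl g₁.toSubmodule g₂.toSubmodule)
    (p₁ : g →ₗ[k] g₁) (p₂ : g →ₗ[k] g₂)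
    (hp : ∀ x : g, (p₁ x : g) + (p₂ x : g) = x)
    (Φ : g →ₗ[k] Module.End k
        (TensorAlgebra k g₁ ⊗[k] UniversalEnvelopingAlgebra k g₂))
    (hΦa : ∀ (G : g) (m : UniversalEnvelopingAlgebra k g₂),
        Φ G (1 ⊗ₜ[k] m) =
          TensorAlgebra.ι k (p₁ G) ⊗ₜ[k] m +
            1 ⊗ₜ[k] (UniversalEnvelopingAlgebra.ι k (p₂ G) * m))
    (hΦb : ∀ (G : g) (x : g₁) (t : TensorAlgebra k g₁)
        (m : UniversalEnvelopingAlgebra k g₂),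
        Φ G ((TensorAlgebra.ι k x * t) ⊗ₜ[k] m) =
          Φ ⁅G, (x : g)⁆ (t ⊗ₜ[k] m) +
            TensorProduct.map (LinearMap.mulLeft k (TensorAlgebra.ι k x))
              LinearMap.id (Φ G (t ⊗ₜ[k] m))) :
    ∃! ΦU : g →ₗ[k] Module.End k
        (UniversalEnvelopingAlgebra k g₁ ⊗[k] UniversalEnvelopingAlgebra k g₂),
      ∀ G : g,
        (TensorProduct.map (UniversalEnvelopingAlgebra.mkAlgHom k g₁).toLinearMap
            (LinearMap.id (R := k) (M := UniversalEnvelopingAlgebra k g₂))).comp (Φ G) =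
          (ΦU G).comp
            (TensorProduct.map (UniversalEnvelopingAlgebra.mkAlgHom k g₁).toLinearMap
              (LinearMap.id (R := k) (M := UniversalEnvelopingAlgebra k g₂))) := by
  have hsurj : Function.Surjective
      (TensorProduct.map (UniversalEnvelopingAlgebra.mkAlgHom k g₁).toLinearMap
        (LinearMap.id (R := k) (M := UniversalEnvelopingAlgebra k g₂))) :=
    TensorProduct.map_surjective (PhiDescent.mkAlgHom_surjective g₁) Function.surjective_id
  let B : UniversalEnvelopingAlgebra k g₁ →ₗ[k] UniversalEnvelopingAlgebra k g₂ →ₗ[k] g →ₗ[k]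
      UniversalEnvelopingAlgebra k g₁ ⊗[k] UniversalEnvelopingAlgebra k g₂ :=
    (PhiDescent.homAct g₁ g₂).toLinearMap.compl₂
      (PhiDescent.projected Φ ∘ₗ TensorProduct.mk k _ _ 1)
  refine ⟨(TensorProduct.lift B).flip, fun G => ?_, fun Ψ hΨ => ?_⟩
  · refine TensorProduct.ext' fun t m => ?_
    exact (LinearMap.congr_fun (PhiDescent.homAct_mkAlgHom Φ hΦb t m) G).symm
  · ext1 G
    rw [← LinearMap.cancel_right hsurj, ← hΨ G]
    refine TensorProduct.ext' fun t m => ?_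
    exact (LinearMap.congr_fun (PhiDescent.homAct_mkAlgHom Φ hΦb t m) G).symm
end

section
/- There exists a unique k-linear map Φ_U : g →ₗ End_k(U(g1) ⊗_k U(g2)) such that: (a) for all g ∈ g and m ∈ U(g2), Φ_U(g)(1 ⊗ m) = σ1(p1(g)) ⊗ m + 1 ⊗ (σ2(p2(g))·m); and (b) for all g ∈ g, x ∈ g1, t ∈ U(g1), m ∈ U(g2), Φ_U(g)((σ1(x)·t) ⊗ m) = Φ_U([g, j1(x)])(t ⊗ m) + (L_{σ1(x)} ⊗ id)(Φ_U(g)(t ⊗ m)), where L_{σ1(x)} is left multiplication by σ1(x) in U(g1). -/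
open scoped TensorProduct

/-!
Write `V = U(g₁) ⊗ U(g₂)`. A linear map `g → End V` is the same as a linear map
`F : V → Hom(g, V)`. Let `g₁` act on `V` by left multiplication on the first factor, on `g` by the
adjoint action, and on `Hom(g, V)` by the induced action `(x • f)(G) = x • f(G) + f([G, x])`.
Condition (b) says that `F` commutes with `g₁`, hence with `U(g₁)`, and condition (a)
prescribes `F` on `1 ⊗ U(g₂)`. Since `V` is the `U(g₁)`-module induced from the `k`-module `U(g₂)`,
there is exactly one such `F`, namely `F(t ⊗ m) = t • F(1 ⊗ m)`.

The action on `Hom(g, V)` is `homAction`; extending it to `U(g₁)` by the universal property gives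
existence. Uniqueness is the induction principle `UEA_induction`.
-/

section

attribute [local instance] LieRing.ofAssociativeRing

/-- A submodule of `U(L)` that contains `1` and is stable under left multiplication by the
elements of `L` is everything. -/
theorem UEA_induction {k L : Type*} [CommRing k] [LieRing L] [LieAlgebra k L]
    (S : Submodule k (UniversalEnvelopingAlgebra k L)) (h1 : 1 ∈ S)
    (hmul : ∀ (x : L), ∀ t ∈ S, UniversalEnvelopingAlgebra.ι k x * t ∈ S)
    (t : UniversalEnvelopingAlgebra k L) : t ∈ S := by
  -- It suffices that multiplication by every element of the tensor algebra preserves `S`.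
  have key : ∀ a : TensorAlgebra k L, ∀ s ∈ S,
      UniversalEnvelopingAlgebra.mkAlgHom k L a * s ∈ S := by
    intro a
    induction a using TensorAlgebra.induction with
    | algebraMap r =>
      intro s hs
      rw [AlgHom.commutes, ← Algebra.smul_def]
      exact S.smul_mem r hs
    | ι x => exact fun s hs => hmul x s hs
    | mul a b ha hb =>
      intro s hs
      rw [map_mul, mul_assoc]
      exact ha _ (hb _ hs)
    | add a b ha hb =>
      intro s hs
      rw [map_add, add_mul]
      exact S.add_mem (ha _ hs) (hb _ hs)
  obtain ⟨a, rfl⟩ : ∃ a, UniversalEnvelopingAlgebra.mkAlgHom k L a = t :=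
    RingCon.mk'_surjective (c := UniversalEnvelopingAlgebra.ringCon k L) t
  simpa using key a 1 h1

/-- The action `(x • f)(G) = x • f(G) + f([G, x])` of a subalgebra `h` of `g` on `Hom(g, V)`, where
`V = A ⊗ B` and `x` acts on `V` by left multiplication by `θ x` on `A`. -/
noncomputable def homAction {k g A B : Type*} [CommRing k] [LieRing g] [LieAlgebra k g]
    [Ring A] [Algebra k A] [AddCommGroup B] [Module k B]
    (h : LieSubalgebra k g) (θ : h →ₗ⁅k⁆ A) :
    h →ₗ⁅k⁆ Module.End k (g →ₗ[k] A ⊗[k] B) where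
  toFun x :=
    { toFun := fun f => TensorProduct.map (LinearMap.mulLeft k (θ x)) LinearMap.id ∘ₗ f
        - f ∘ₗ (LieAlgebra.ad k g (x : g) : g →ₗ[k] g)
      map_add' := fun f f' => by ext G; simp; abel
      map_smul' := fun c f => by ext G; simp [smul_sub] }
  map_add' x y := by
    have hL : TensorProduct.map (LinearMap.mulLeft k (θ x + θ y)) (LinearMap.id : B →ₗ[k] B)
        = TensorProduct.map (LinearMap.mulLeft k (θ x)) LinearMap.id
          + TensorProduct.map (LinearMap.mulLeft k (θ y)) LinearMap.id := by
      ext a b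
      simp [add_mul, TensorProduct.add_tmul]
    ext f G
    simp [hL]
    abel
  map_smul' c x := by
    have hL : TensorProduct.map (LinearMap.mulLeft k (c • θ x)) (LinearMap.id : B →ₗ[k] B)
        = c • TensorProduct.map (LinearMap.mulLeft k (θ x)) LinearMap.id := by
      ext a b
      simp [TensorProduct.smul_tmul']
    ext f G
    simp [hL, smul_sub]
  map_lie' {x y} := by
    have hL : TensorProduct.map (LinearMap.mulLeft k (θ x * θ y - θ y * θ x))
          (LinearMap.id : B →ₗ[k] B)
        = TensorProduct.map (LinearMap.mulLeft k (θ x)) LinearMap.id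
            ∘ₗ TensorProduct.map (LinearMap.mulLeft k (θ y)) LinearMap.id
          - TensorProduct.map (LinearMap.mulLeft k (θ y)) LinearMap.id
            ∘ₗ TensorProduct.map (LinearMap.mulLeft k (θ x)) LinearMap.id := by
      ext a b
      simp [sub_mul, TensorProduct.sub_tmul, mul_assoc]
    ext f G
    simp [LieRing.of_associative_ring_bracket, hL]
    abel

theorem homAction_apply {k g A B : Type*} [CommRing k] [LieRing g] [LieAlgebra k g]
    [Ring A] [Algebra k A] [AddCommGroup B] [Module k B]
    (h : LieSubalgebra k g) (θ : h →ₗ⁅k⁆ A) (x : h) (f : g →ₗ[k] A ⊗[k] B) (G : g) :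
    homAction h θ x f G = f ⁅G, (x : g)⁆ +
      TensorProduct.map (LinearMap.mulLeft k (θ x)) LinearMap.id (f G) := by
  rw [← lie_skew, map_neg, neg_add_eq_sub]
  rfl

/-- The canonical map `L → U(L)` as a linear map. -/
def ιLinear (k L : Type*) [CommRing k] [LieRing L] [LieAlgebra k L] :
    L →ₗ[k] UniversalEnvelopingAlgebra k L :=
  (UniversalEnvelopingAlgebra.ι k : L →ₗ⁅k⁆ UniversalEnvelopingAlgebra k L).toLinearMap

end

theorem exists_unique_PhiU {k : Type*} [CommRing k] {g : Type*} [LieRing g]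
    [LieAlgebra k g] (g₁ g₂ : LieSubalgebra k g)
    (hcompl : IsCompl g₁.toSubmodule g₂.toSubmodule)
    (p₁ : g →ₗ[k] g₁) (p₂ : g →ₗ[k] g₂)
    (hp : ∀ x : g, (p₁ x : g) + (p₂ x : g) = x) :
    ∃! ΦU : g →ₗ[k] Module.End k
        (UniversalEnvelopingAlgebra k g₁ ⊗[k] UniversalEnvelopingAlgebra k g₂),
      (∀ (G : g) (m : UniversalEnvelopingAlgebra k g₂),
          ΦU G (1 ⊗ₜ[k] m) =
            UniversalEnvelopingAlgebra.ι k (p₁ G) ⊗ₜ[k] m +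
              1 ⊗ₜ[k] (UniversalEnvelopingAlgebra.ι k (p₂ G) * m)) ∧
      (∀ (G : g) (x : g₁) (t : UniversalEnvelopingAlgebra k g₁)
          (m : UniversalEnvelopingAlgebra k g₂),
          ΦU G ((UniversalEnvelopingAlgebra.ι k x * t) ⊗ₜ[k] m) =
            ΦU ⁅G, (x : g)⁆ (t ⊗ₜ[k] m) +
              TensorProduct.map
                (LinearMap.mulLeft k (UniversalEnvelopingAlgebra.ι k x))
                LinearMap.id (ΦU G (t ⊗ₜ[k] m))) := by
  refine existsUnique_of_exists_of_unique ?_ ?_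
  · -- `α` is the action of `U(g₁)` on `Hom(g, V)`, and `β m` the value `F(1 ⊗ m)` forced by (a).
    let α := UniversalEnvelopingAlgebra.lift k (homAction
      (B := UniversalEnvelopingAlgebra k g₂) g₁ (UniversalEnvelopingAlgebra.ι k))
    let β : UniversalEnvelopingAlgebra k g₂ →ₗ[k] g →ₗ[k]
        UniversalEnvelopingAlgebra k g₁ ⊗[k] UniversalEnvelopingAlgebra k g₂ :=
      ((TensorProduct.mk k _ _).comp
          (ιLinear k g₁ ∘ₗ p₁)).flip +
        (((LinearMap.mul k _).compr₂ (TensorProduct.mk k _ _ 1)).comp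
          (ιLinear k g₂ ∘ₗ p₂)).flip
    let Ψ := (TensorProduct.lift (LinearMap.compl₂ α.toLinearMap β)).flip
    have hΨ : ∀ G t m, Ψ G (t ⊗ₜ[k] m) = α t (β m) G := fun _ _ _ => rfl
    refine ⟨Ψ, fun G m => ?_, fun G x t m => ?_⟩
    · rw [hΨ, map_one]
      rfl
    · rw [hΨ, hΨ, hΨ, map_mul, UniversalEnvelopingAlgebra.lift_ι_apply, Module.End.mul_apply,
        homAction_apply]
  · rintro Φ Φ' ⟨ha, hb⟩ ⟨ha', hb'⟩
    let S : Submodule k (UniversalEnvelopingAlgebra k g₁) :=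
      { carrier := {t | ∀ G m, Φ G (t ⊗ₜ[k] m) = Φ' G (t ⊗ₜ[k] m)}
        zero_mem' := fun G m => by simp
        add_mem' := fun hs ht G m => by
          rw [TensorProduct.add_tmul, map_add, map_add, hs, ht]
        smul_mem' := fun c t ht G m => by
          rw [← TensorProduct.smul_tmul', map_smul, map_smul, ht] }
    have hS : ∀ t, t ∈ S := UEA_induction S (fun G m => by rw [ha, ha'])
      (fun x t ht G m => by rw [hb, hb', ht, ht])
    exact LinearMap.ext fun G => TensorProduct.ext' fun t m => hS t G m
end

section
/- There exists a unique morphism of associative unital k-algebras φ̂ : U(g) → End_k(U(g1) ⊗_k U(g2)) such that φ̂(σ(g)) = Φ_U(g) for all g ∈ g; in other words, the Lie action Φ_U extends uniquely to a left U(g)-module structure on U(g1) ⊗_k U(g2). -/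
/-!
The algebra morphism comes from the universal property of `U(g)` once `ΦU` is known to respect
brackets; uniqueness is part of that universal property.

Write `L x` for left multiplication by `σ₁ x` on the first tensor factor and
`D a b = [ΦU a, ΦU b] - ΦU ⁅a, b⁆`. Hypothesis (b) says `[ΦU a, L x] = ΦU ⁅a, x⁆`, so the Jacobi
identities in `g` and in `End` give `D a b ∘ L x = L x ∘ D a b + D a ⁅b, x⁆ + D ⁅a, x⁆ b`. Since
`U(g₁)` is generated from `1` by left multiplications with elements of `g₁`
(`PhiU.left_induction`), it suffices that `D a b` vanishes on `1 ⊗ m` for all `a`, `b`. There,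
(a) and (b) reduce the claim to
`⁅a, b⁆ = ⁅a, p₁ b⁆ + ⁅p₁ a, b⁆ - ⁅p₁ a, p₁ b⁆ + ⁅p₂ a, p₂ b⁆`
and to the fact that `g₁`, `g₂` are closed under brackets, so that `ΦU` acts on `1 ⊗ m` by
`σ₁` or `σ₂` of the last two terms.
-/

open scoped TensorProduct

namespace PhiU

open UniversalEnvelopingAlgebra

/-- A linear subset of `U(L)` that contains `1` and is stable under left multiplication by
elements of `L` is everything. -/
theorem left_induction {k L : Type*} [CommRing k] [LieRing L] [LieAlgebra k L]
    (P : Submodule k (UniversalEnvelopingAlgebra k L)) (one : 1 ∈ P)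
    (mul : ∀ (x : L), ∀ t ∈ P, ι k x * t ∈ P) (t : UniversalEnvelopingAlgebra k L) : t ∈ P := by
  obtain ⟨s, rfl⟩ : ∃ s, mkAlgHom k L s = t := RingCon.mk'_surjective _ t
  -- The multiplicative step of the induction needs stability of `P` under multiplication by `s`.
  suffices h : ∀ t ∈ P, mkAlgHom k L s * t ∈ P by simpa using h 1 one
  induction s using TensorAlgebra.induction with
  | algebraMap r =>
    intro t ht
    simpa [← Algebra.smul_def] using P.smul_mem r ht
  | ι x =>
    intro t ht
    simpa using mul x t ht
  | mul a b ha hb =>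
    intro t ht
    simpa [mul_assoc] using ha _ (hb t ht)
  | add a b ha hb =>
    intro t ht
    simpa [add_mul] using P.add_mem (ha t ht) (hb t ht)

/-- The projections along a complement restrict to the identity and to zero on the first
summand. -/
theorem proj_of_mem {k M : Type*} [CommRing k] [AddCommGroup M] [Module k M]
    {A B : Submodule k M} (h : Disjoint A B) {x a b : M} (hx : x ∈ A) (ha : a ∈ A) (hb : b ∈ B)
    (hab : a + b = x) : a = x ∧ b = 0 := by
  have hb0 : b = 0 := by
    refine Submodule.disjoint_def.1 h b ?_ hb
    rw [← add_sub_cancel_left a b, hab]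
    exact A.sub_mem hx ha
  exact ⟨by simpa [hb0] using hab, hb0⟩

section

attribute [local instance] LieRing.ofAssociativeRing

theorem ι_lie {k L : Type*} [CommRing k] [LieRing L] [LieAlgebra k L] (x y : L) :
    ι k ⁅x, y⁆ = ι k x * ι k y - ι k y * ι k x := by
  rw [LieHom.map_lie, LieRing.of_associative_ring_bracket]

/-- The universal property of `U(L)`, for a linear map into an associative algebra that turns
brackets into commutators. -/
theorem existsUnique_lift {k L A : Type*} [CommRing k] [LieRing L] [LieAlgebra k L] [Ring A]
    [Algebra k A] (f : L →ₗ[k] A) (hf : ∀ a b, f ⁅a, b⁆ = f a * f b - f b * f a) :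
    ∃! φ : UniversalEnvelopingAlgebra k L →ₐ[k] A, ∀ x, φ (ι k x) = f x := by
  let F : L →ₗ⁅k⁆ A :=
    { f with
      map_lie' := fun {a b} => by
        rw [LieRing.of_associative_ring_bracket]
        exact hf a b }
  exact ⟨lift k F, fun x => lift_ι_apply k F x,
    fun ψ hψ => (lift_unique k F ψ).1 (funext hψ)⟩

end

end PhiU

theorem exists_unique_algHom_extending_PhiU {k : Type*} [CommRing k] {g : Type*}
    [LieRing g] [LieAlgebra k g] (g₁ g₂ : LieSubalgebra k g)
    (hcompl : IsCompl g₁.toSubmodule g₂.toSubmodule)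
    (p₁ : g →ₗ[k] g₁) (p₂ : g →ₗ[k] g₂)
    (hp : ∀ x : g, (p₁ x : g) + (p₂ x : g) = x)
    (ΦU : g →ₗ[k] Module.End k
        (UniversalEnvelopingAlgebra k g₁ ⊗[k] UniversalEnvelopingAlgebra k g₂))
    (hΦUa : ∀ (G : g) (m : UniversalEnvelopingAlgebra k g₂),
        ΦU G (1 ⊗ₜ[k] m) =
          UniversalEnvelopingAlgebra.ι k (p₁ G) ⊗ₜ[k] m +
            1 ⊗ₜ[k] (UniversalEnvelopingAlgebra.ι k (p₂ G) * m))
    (hΦUb : ∀ (G : g) (x : g₁) (t : UniversalEnvelopingAlgebra k g₁)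
        (m : UniversalEnvelopingAlgebra k g₂),
        ΦU G ((UniversalEnvelopingAlgebra.ι k x * t) ⊗ₜ[k] m) =
          ΦU ⁅G, (x : g)⁆ (t ⊗ₜ[k] m) +
            TensorProduct.map
              (LinearMap.mulLeft k (UniversalEnvelopingAlgebra.ι k x))
              LinearMap.id (ΦU G (t ⊗ₜ[k] m))) :
    ∃! φ : UniversalEnvelopingAlgebra k g →ₐ[k]
        Module.End k
          (UniversalEnvelopingAlgebra k g₁ ⊗[k] UniversalEnvelopingAlgebra k g₂),
      ∀ G : g, φ (UniversalEnvelopingAlgebra.ι k G) = ΦU G := by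
  have act₁ : ∀ (x : g₁) (m : UniversalEnvelopingAlgebra k g₂), ΦU (x : g) (1 ⊗ₜ[k] m) =
      UniversalEnvelopingAlgebra.ι k x ⊗ₜ[k] m := fun x m => by
    obtain ⟨h₁, h₂⟩ := PhiU.proj_of_mem hcompl.disjoint x.2 (p₁ x).2 (p₂ x).2 (hp x)
    rw [hΦUa, Subtype.ext h₁, show p₂ (x : g) = 0 from Subtype.ext h₂]
    simp only [map_zero, zero_mul, TensorProduct.tmul_zero, add_zero]
  have act₂ : ∀ (y : g₂) (m : UniversalEnvelopingAlgebra k g₂), ΦU (y : g) (1 ⊗ₜ[k] m) =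
      1 ⊗ₜ[k] (UniversalEnvelopingAlgebra.ι k y * m) := fun y m => by
    obtain ⟨h₂, h₁⟩ := PhiU.proj_of_mem hcompl.symm.disjoint y.2 (p₂ y).2 (p₁ y).2
      ((add_comm _ _).trans (hp y))
    rw [hΦUa, Subtype.ext h₂, show p₁ (y : g) = 0 from Subtype.ext h₁]
    simp only [map_zero, TensorProduct.zero_tmul, zero_add]
  have hb : ∀ (G : g) (x : g₁) (w), ΦU G (TensorProduct.map
      (LinearMap.mulLeft k (UniversalEnvelopingAlgebra.ι k x)) LinearMap.id w) =
        ΦU ⁅G, (x : g)⁆ w + TensorProduct.map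
          (LinearMap.mulLeft k (UniversalEnvelopingAlgebra.ι k x)) LinearMap.id (ΦU G w) := by
    intro G x w
    induction w using TensorProduct.induction_on with
    | zero => simp only [map_zero, add_zero]
    | tmul t m => exact hΦUb G x t m
    | add u v hu hv => simp only [map_add, hu, hv]; abel
  have two : ∀ (a b : g) (m : UniversalEnvelopingAlgebra k g₂), ΦU a (ΦU b (1 ⊗ₜ[k] m)) =
      ΦU ⁅a, (p₁ b : g)⁆ (1 ⊗ₜ[k] m) +
      ((UniversalEnvelopingAlgebra.ι k (p₁ b) * UniversalEnvelopingAlgebra.ι k (p₁ a)) ⊗ₜ[k] m +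
        UniversalEnvelopingAlgebra.ι k (p₁ b) ⊗ₜ[k] (UniversalEnvelopingAlgebra.ι k (p₂ a) * m)) +
      (UniversalEnvelopingAlgebra.ι k (p₁ a) ⊗ₜ[k] (UniversalEnvelopingAlgebra.ι k (p₂ b) * m) +
        1 ⊗ₜ[k] (UniversalEnvelopingAlgebra.ι k (p₂ a) *
          (UniversalEnvelopingAlgebra.ι k (p₂ b) * m))) := by
    intro a b m
    have h := hΦUb a (p₁ b) 1 m
    rw [mul_one, hΦUa a m, map_add, TensorProduct.map_tmul, TensorProduct.map_tmul,
      LinearMap.mulLeft_apply, LinearMap.mulLeft_apply, mul_one, LinearMap.id_apply,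
      LinearMap.id_apply] at h
    rw [hΦUa b m, map_add, h, hΦUa a (UniversalEnvelopingAlgebra.ι k (p₂ b) * m)]
  have base : ∀ (a b : g) (m : UniversalEnvelopingAlgebra k g₂), ΦU ⁅a, b⁆ (1 ⊗ₜ[k] m) =
      ΦU a (ΦU b (1 ⊗ₜ[k] m)) - ΦU b (ΦU a (1 ⊗ₜ[k] m)) := by
    intro a b m
    have key : ⁅a, b⁆ = ⁅a, (p₁ b : g)⁆ - ⁅b, (p₁ a : g)⁆ - ((⁅p₁ a, p₁ b⁆ : g₁) : g) +
        ((⁅p₂ a, p₂ b⁆ : g₂) : g) := by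
      have ha := hp a
      have hb' := hp b
      generalize p₁ a = a₁ at *
      generalize p₂ a = a₂ at *
      generalize p₁ b = b₁ at *
      generalize p₂ b = b₂ at *
      subst ha hb'
      simp only [LieSubalgebra.coe_bracket, lie_add, add_lie]
      rw [← lie_skew (b₁ : g) (a₁ : g), ← lie_skew (b₂ : g) (a₁ : g)]
      abel
    rw [two, two, key]
    simp only [map_add, map_sub, LinearMap.add_apply, LinearMap.sub_apply]
    rw [act₁, act₂, PhiU.ι_lie, PhiU.ι_lie, TensorProduct.sub_tmul, sub_mul, TensorProduct.tmul_sub,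
      mul_assoc, mul_assoc]
    abel
  have comm : ∀ (t : UniversalEnvelopingAlgebra k g₁) (m : UniversalEnvelopingAlgebra k g₂)
      (a b : g), ΦU ⁅a, b⁆ (t ⊗ₜ[k] m) =
        ΦU a (ΦU b (t ⊗ₜ[k] m)) - ΦU b (ΦU a (t ⊗ₜ[k] m)) := by
    intro t m
    -- The inductive step replaces `a`, `b` by `⁅a, x⁆`, `⁅b, x⁆`, hence the quantifiers inside `P`.
    let P : Submodule k (UniversalEnvelopingAlgebra k g₁) :=
      { carrier := {t | ∀ a b : g, ΦU ⁅a, b⁆ (t ⊗ₜ[k] m) =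
          ΦU a (ΦU b (t ⊗ₜ[k] m)) - ΦU b (ΦU a (t ⊗ₜ[k] m))}
        zero_mem' := fun a b => by simp only [TensorProduct.zero_tmul, map_zero, sub_zero]
        add_mem' := fun {s t} hs ht a b => by
          simp only [TensorProduct.add_tmul, map_add, hs a b, ht a b]; abel
        smul_mem' := fun c t ht a b => by
          simp only [map_smul, ht a b, smul_sub,
            ← TensorProduct.smul_tmul'] }
    refine PhiU.left_induction P (fun a b => base a b m) (fun x t ht a b => ?_) t
    have jac : ⁅⁅a, b⁆, (x : g)⁆ = ⁅a, ⁅b, (x : g)⁆⁆ - ⁅b, ⁅a, (x : g)⁆⁆ := lie_lie a b (x : g)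
    rw [hΦUb, hΦUb, hΦUb, map_add, map_add, hb, hb, jac, map_sub, LinearMap.sub_apply,
      ht a b, ht a ⁅b, (x : g)⁆, ht b ⁅a, (x : g)⁆, map_sub]
    abel
  exact PhiU.existsUnique_lift ΦU fun a b => TensorProduct.ext' fun t m => comm t m a b
end
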